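/- Let F_x denote the distribution function of T₂ = n⁻¹ Σᵢ log Yᵢ - log(n⁻¹ Σᵢ Yᵢ) where Y₁,...,Yₙ are iid Gamma(x, 1), n ≥ 2. Then for every t₂ in the support (which is a subset of (-∞, 0)) and every u₂ ∈ (0,1), the equation F_x(t₂) = u₂ has a solution in x ∈ (0,∞), and this solution is unique; i.e., x ↦ F_x(t₂) is strictly decreasing with limits 1 as x → 0⁺ and 0 as x → ∞. -/

import Mathlib

open MeasureTheory Set Filter

/-- The distribution function `F_x(t)` of
`T₂ = n⁻¹ Σᵢ log Yᵢ - log(n⁻¹ Σᵢ Yᵢ)` when `Y₁,…,Yₙ` are iid `Gamma(x,1)`. -/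
noncomputable def gammaLogRatioCDF (n : ℕ) (x t : ℝ) : ℝ :=
  ((Measure.pi fun _ : Fin n => ProbabilityTheory.gammaMeasure x 1)
    {y : Fin n → ℝ |
      (∑ i, Real.log (y i)) / n - Real.log ((∑ i, y i) / n) ≤ t}).toReal

/-!
Write `S` for the sum of the sample. Multiplying the density by `exp (-c S)` only changes the rate
of the sample, and `T₂` is invariant under scaling, so `T₂` is uncorrelated with `exp (-c S)` and,
by superposition over `c`, with every negative power of `S`. Since `(∏ Yᵢ)^(b - a)` is
`exp (n (b - a) T₂)` times the power `n (b - a)` of the sample mean, the law of `T₂` at shape `b`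
is the exponential tilt of its law at shape `a` by `n (b - a)`, for `b < a`. Such a family has
monotone likelihood ratio, which gives the strict decrease and the limit at infinity, and it is
continuous in its parameter. As the shape `x` tends to `0`, the density of `log Yᵢ` is at most
`1 / Γ(x) → 0`, whereas `T₂ > t` confines `log Yᵢ - log Yⱼ` to a fixed bounded interval.
-/

namespace GammaLogRatio

open ProbabilityTheory Topology
open Real (exp log Gamma)
open scoped ENNReal

section Tilting

variable {Ω : Type*} [MeasurableSpace Ω]

theorem eq_tilted_of_eq_smul_withDensity {μ ν : Measure Ω} [IsProbabilityMeasure ν] {f : Ω → ℝ}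
    (hf : Measurable f) {k : ℝ≥0∞}
    (h : ν = k • μ.withDensity fun ω => ENNReal.ofReal (exp (f ω))) : ν = μ.tilted f := by
  have hk : k * ∫⁻ ω, ENNReal.ofReal (exp (f ω)) ∂μ = 1 := by
    rw [← setLIntegral_univ, ← withDensity_apply _ .univ, ← smul_eq_mul, ← Measure.smul_apply, ← h,
      measure_univ]
  have hk_inv := ENNReal.eq_inv_of_mul_eq_one_left hk
  have hZ : ∫⁻ ω, ENNReal.ofReal (exp (f ω)) ∂μ = ENNReal.ofReal (∫ ω, exp (f ω) ∂μ) := by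
    refine (ofReal_integral_eq_lintegral_ofReal ⟨by fun_prop, ?_⟩
      (ae_of_all _ fun ω => (Real.exp_pos _).le)).symm
    rw [hasFiniteIntegral_iff_ofReal (ae_of_all _ fun ω => (Real.exp_pos _).le), lt_top_iff_ne_top]
    intro htop
    simp [htop] at hk_inv
    simp [hk_inv] at hk
  have hZ_pos : 0 < ∫ ω, exp (f ω) ∂μ := by
    by_contra! hle
    simp [hZ, ENNReal.ofReal_of_nonpos hle] at hk
  rw [h, ← withDensity_smul _ (by fun_prop), Measure.tilted]
  congr with ω
  rw [Pi.smul_apply, smul_eq_mul, ENNReal.ofReal_div_of_pos hZ_pos, hk_inv, hZ,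
    ENNReal.div_eq_inv_mul]

theorem measure_mul_tilted_le {μ : Measure Ω} {f : Ω → ℝ} {A B : Set Ω} {a b : ℝ}
    (hA : MeasurableSet A) (hB : MeasurableSet B)
    (hfA : ∀ ω ∈ A, a ≤ f ω) (hfB : ∀ ω ∈ B, f ω ≤ b) :
    μ A * μ.tilted f B ≤ ENNReal.ofReal (exp (b - a)) * (μ.tilted f A * μ B) := by
  set Z := ∫ ω, exp (f ω) ∂μ
  have : 0 ≤ Z := integral_nonneg fun ω => (Real.exp_pos _).le
  have h_lower : ENNReal.ofReal (exp a / Z) * μ A ≤ μ.tilted f A := by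
    rw [tilted_apply' _ _ hA, ← setLIntegral_const]
    refine setLIntegral_mono' hA fun ω hω => ENNReal.ofReal_le_ofReal ?_
    gcongr
    exact hfA ω hω
  have h_upper : μ.tilted f B ≤ ENNReal.ofReal (exp b / Z) * μ B := by
    rw [tilted_apply' _ _ hB, ← setLIntegral_const]
    refine setLIntegral_mono' hB fun ω hω => ENNReal.ofReal_le_ofReal ?_
    gcongr
    exact hfB ω hω
  have h_exp : ENNReal.ofReal (exp b / Z) =
      ENNReal.ofReal (exp (b - a)) * ENNReal.ofReal (exp a / Z) := by
    rw [← ENNReal.ofReal_mul (Real.exp_pos _).le, ← mul_div_assoc, ← Real.exp_add, sub_add_cancel]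
  calc μ A * μ.tilted f B
      ≤ μ A * (ENNReal.ofReal (exp b / Z) * μ B) := by gcongr
    _ = ENNReal.ofReal (exp (b - a)) * (ENNReal.ofReal (exp a / Z) * μ A * μ B) := by
        rw [h_exp]; ring
    _ ≤ ENNReal.ofReal (exp (b - a)) * (μ.tilted f A * μ B) := by gcongr

theorem real_mul_tilted_real_le {μ : Measure Ω} [IsFiniteMeasure μ] {f : Ω → ℝ} {A B : Set Ω}
    {a b : ℝ} (hA : MeasurableSet A) (hB : MeasurableSet B)
    (hfA : ∀ ω ∈ A, a ≤ f ω) (hfB : ∀ ω ∈ B, f ω ≤ b) :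
    μ.real A * (μ.tilted f).real B ≤ exp (b - a) * ((μ.tilted f).real A * μ.real B) := by
  have h := measure_mul_tilted_le (μ := μ) hA hB hfA hfB
  simpa only [measureReal_def, ENNReal.toReal_mul, ENNReal.toReal_ofReal (Real.exp_pos _).le] using
    ENNReal.toReal_mono (by finiteness) h

theorem real_Iic_lt_tilted_real_Iic {ν : Measure ℝ} [IsProbabilityMeasure ν] {θ s t : ℝ}
    (hθ : θ < 0) (hts : t < s) (hint : Integrable (fun u => exp (θ * u)) ν)
    (ht : ν (Iic t) ≠ 0) (hs : ν (Ioi s) ≠ 0) :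
    ν.real (Iic t) < (ν.tilted (θ * ·)).real (Iic t) := by
  have := isProbabilityMeasure_tilted hint
  set τ := ν.tilted (θ * ·)
  have h_Iic : ∀ u ∈ Iic t, θ * t ≤ θ * u := fun u hu => mul_le_mul_of_nonpos_left hu hθ.le
  have h_mid : ν.real (Iic t) * τ.real (Ioc t s) ≤ τ.real (Iic t) * ν.real (Ioc t s) := by
    simpa using real_mul_tilted_real_le measurableSet_Iic measurableSet_Ioc h_Iic
      fun u (hu : u ∈ Ioc t s) => mul_le_mul_of_nonpos_left hu.1.le hθ.le
  have h_top : ν.real (Iic t) * τ.real (Ioi s) < τ.real (Iic t) * ν.real (Ioi s) := by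
    have hτt : 0 < τ.real (Iic t) :=
      (measureReal_ne_zero_iff).2 (fun h => ht (absolutelyContinuous_tilted hint h))
        |>.lt_of_le' measureReal_nonneg
    have hνs : 0 < ν.real (Ioi s) := ENNReal.toReal_pos hs (by finiteness)
    calc ν.real (Iic t) * τ.real (Ioi s)
        ≤ exp (θ * s - θ * t) * (τ.real (Iic t) * ν.real (Ioi s)) :=
          real_mul_tilted_real_le measurableSet_Iic measurableSet_Ioi h_Iic
            fun u (hu : s < u) => mul_le_mul_of_nonpos_left hu.le hθ.le
      _ < τ.real (Iic t) * ν.real (Ioi s) :=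
          mul_lt_of_lt_one_left (by positivity) (Real.exp_lt_one_iff.2 (by nlinarith))
  have h_split (ρ : Measure ℝ) [IsProbabilityMeasure ρ] :
      ρ.real (Iic t) + ρ.real (Ioc t s) + ρ.real (Ioi s) = 1 := by
    rw [← measureReal_union (Iic_disjoint_Ioc le_rfl) measurableSet_Ioc,
      Iic_union_Ioc_eq_Iic hts.le, ← measureReal_union (Iic_disjoint_Ioi le_rfl) measurableSet_Ioi,
      Iic_union_Ioi, probReal_univ]
  calc ν.real (Iic t)
      = ν.real (Iic t) * (τ.real (Iic t) + τ.real (Ioc t s) + τ.real (Ioi s)) := by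
        rw [h_split τ, mul_one]
    _ < τ.real (Iic t) * (ν.real (Iic t) + ν.real (Ioc t s) + ν.real (Ioi s)) := by linarith
    _ = τ.real (Iic t) := by rw [h_split ν, mul_one]

theorem real_Iic_mul_tilted_real_Ioi_le {ν : Measure ℝ} [IsProbabilityMeasure ν] {θ s t : ℝ}
    (hθ : θ ≤ 0) : ν.real (Iic t) * (ν.tilted (θ * ·)).real (Ioi s) ≤ exp (θ * (s - t)) := by
  calc ν.real (Iic t) * (ν.tilted (θ * ·)).real (Ioi s)
      ≤ exp (θ * s - θ * t) * ((ν.tilted (θ * ·)).real (Iic t) * ν.real (Ioi s)) :=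
        real_mul_tilted_real_le measurableSet_Iic measurableSet_Ioi
          (fun u hu => mul_le_mul_of_nonpos_left hu hθ)
          fun u (hu : s < u) => mul_le_mul_of_nonpos_left hu.le hθ
    _ ≤ exp (θ * s - θ * t) * 1 := by
        gcongr
        exact mul_le_one₀ measureReal_le_one measureReal_nonneg measureReal_le_one
    _ = exp (θ * (s - t)) := by rw [mul_one, mul_sub]

theorem tilted_real_apply {μ : Measure Ω} {X : Ω → ℝ} {A : Set Ω} (hA : MeasurableSet A) (θ : ℝ) :
    (μ.tilted (θ * X ·)).real A = mgf X (μ.restrict A) θ / mgf X μ θ := by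
  rw [measureReal_def, tilted_mul_apply_eq_ofReal_integral_mgf' hA, integral_div,
    ENNReal.toReal_ofReal]
  · rfl
  · exact div_nonneg mgf_nonneg mgf_nonneg

theorem continuousOn_tilted_real_apply {μ : Measure Ω} [NeZero μ] {X : Ω → ℝ} {A : Set Ω}
    (hA : MeasurableSet A) :
    ContinuousOn (fun θ => (μ.tilted (θ * X ·)).real A) (interior (integrableExpSet X μ)) := by
  have h_subset : integrableExpSet X μ ⊆ integrableExpSet X (μ.restrict A) :=
    fun θ hθ => Integrable.restrict hθ
  simp only [tilted_real_apply hA]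
  refine (continuousOn_mgf.mono (interior_mono h_subset)).div continuousOn_mgf fun θ hθ => ?_
  have hθ_mem : θ ∈ integrableExpSet X μ := interior_subset hθ
  exact (mgf_pos' (NeZero.ne μ) hθ_mem).ne'

end Tilting

section Pi

variable {ι : Type*} [Fintype ι] {E : ι → Type*} [∀ i, MeasurableSpace (E i)]
  {μ : ∀ i, Measure (E i)}

theorem lintegral_pi_prod [∀ i, IsProbabilityMeasure (μ i)] {f : ∀ i, E i → ℝ≥0∞}
    (hf : ∀ i, Measurable (f i)) :
    ∫⁻ y, ∏ i, f i (y i) ∂Measure.pi μ = ∏ i, ∫⁻ z, f i z ∂μ i := by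
  rw [lintegral_prod_eq_prod_lintegral_of_indepFun _ _
    (iIndepFun_pi fun i => (hf i).aemeasurable) fun i => (hf i).comp (measurable_pi_apply i)]
  exact Finset.prod_congr rfl fun i _ => (measurePreserving_eval μ i).lintegral_comp (hf i)

theorem pi_withDensity [∀ i, IsProbabilityMeasure (μ i)] {f : ∀ i, E i → ℝ≥0∞}
    [∀ i, SigmaFinite ((μ i).withDensity (f i))] (hf : ∀ i, Measurable (f i)) :
    Measure.pi (fun i => (μ i).withDensity (f i)) =
      (Measure.pi μ).withDensity fun y => ∏ i, f i (y i) := by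
  classical
  refine Measure.pi_eq fun s hs => ?_
  have h_indicator (y : ∀ i, E i) : (univ.pi s).indicator (fun y => ∏ i, f i (y i)) y =
      ∏ i, (s i).indicator (f i) (y i) := by
    simp [Set.indicator_apply, Finset.prod_ite_zero]
  rw [withDensity_apply _ (.univ_pi hs), ← lintegral_indicator (.univ_pi hs)]
  simp only [h_indicator, lintegral_pi_prod fun i => (hf i).indicator (hs i),
    lintegral_indicator (hs _), withDensity_apply _ (hs _)]

theorem pi_tilted [∀ i, IsProbabilityMeasure (μ i)] {f : ∀ i, E i → ℝ}
    (hf : ∀ i, Measurable (f i)) :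
    Measure.pi (fun i => (μ i).tilted (f i)) =
      (Measure.pi μ).tilted fun y => ∑ i, f i (y i) := by
  have (i : ι) : SigmaFinite
      ((μ i).withDensity fun z => ENNReal.ofReal (exp (f i z) / ∫ z, exp (f i z) ∂μ i)) :=
    inferInstanceAs (SigmaFinite ((μ i).tilted (f i)))
  unfold Measure.tilted
  rw [pi_withDensity fun i => by fun_prop]
  congr with y
  simp only [Real.exp_sum]
  rw [integral_fintype_prod_eq_prod (f := fun i z => exp (f i z)), ← Finset.prod_div_distrib,
    ENNReal.ofReal_prod_of_nonneg]
  exact fun i _ => div_nonneg (Real.exp_pos _).le (integral_nonneg fun z => (Real.exp_pos _).le)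

theorem mem_support_pi [∀ i, SigmaFinite (μ i)] [∀ i, TopologicalSpace (E i)] {y : ∀ i, E i}
    (hy : ∀ i, y i ∈ (μ i).support) : y ∈ (Measure.pi μ).support := by
  refine (Measure.mem_support_iff_forall y).2 fun U hU => ?_
  rw [nhds_pi, Filter.mem_pi'] at hU
  obtain ⟨I, s, hs, hsU⟩ := hU
  calc 0 < ∏ i, μ i (s i) :=
        CanonicallyOrderedAdd.prod_pos.2 fun i _ =>
          (Measure.mem_support_iff_forall _).1 (hy i) _ (hs i)
    _ = Measure.pi μ (univ.pi s) := (Measure.pi_pi μ s).symm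
    _ ≤ Measure.pi μ U :=
        measure_mono ((Set.pi_mono' (fun _ _ => le_rfl) (subset_univ _)).trans hsU)

end Pi

section Gamma

@[fun_prop]
theorem measurable_gammaPDF (a r : ℝ) : Measurable (gammaPDF a r) :=
  (measurable_gammaPDFReal a r).ennreal_ofReal

theorem ae_pos_gammaMeasure (a r : ℝ) : ∀ᵐ y ∂gammaMeasure a r, 0 < y := by
  rw [gammaMeasure, ae_withDensity_iff (measurable_gammaPDF a r)]
  filter_upwards [Measure.ae_ne volume 0] with y hy hpdf
  by_contra! hle
  exact hpdf (gammaPDF_of_neg (hle.lt_of_ne hy))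

theorem mem_support_gammaMeasure {a r y : ℝ} (ha : 0 < a) (hr : 0 < r) (hy : 0 < y) :
    y ∈ (gammaMeasure a r).support := by
  refine (Measure.mem_support_iff_forall y).2 fun U hU => pos_iff_ne_zero.2 fun hU_null => ?_
  have h_vol : volume (U ∩ Ioi 0) = 0 := by
    rw [gammaMeasure, withDensity_apply_eq_zero (measurable_gammaPDF a r)] at hU_null
    have h_subset : U ∩ Ioi 0 ⊆ {z | gammaPDF a r z ≠ 0} ∩ U := fun z hz =>
      ⟨(ENNReal.ofReal_pos.2 (gammaPDFReal_pos ha hr hz.2)).ne', hz.1⟩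
    exact measure_mono_null h_subset hU_null
  exact (Measure.measure_pos_of_mem_nhds volume (inter_mem hU (Ioi_mem_nhds hy))).ne' h_vol

theorem gammaMeasure_eq_tilted {a b r q : ℝ} (ha : 0 < a) (hb : 0 < b) (hr : 0 < r) (hq : 0 < q) :
    gammaMeasure b q = (gammaMeasure a r).tilted fun y => (b - a) * log y - (q - r) * y := by
  have := isProbabilityMeasure_gammaMeasure hb hq
  refine eq_tilted_of_eq_smul_withDensity (by fun_prop)
    (k := ENNReal.ofReal ((q ^ b / Gamma b) / (r ^ a / Gamma a))) ?_
  rw [gammaMeasure, gammaMeasure, ← withDensity_mul _ (measurable_gammaPDF a r) (by fun_prop),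
    ← withDensity_smul _ (by fun_prop)]
  refine withDensity_congr_ae ?_
  filter_upwards [Measure.ae_ne volume 0] with y hy
  rcases hy.lt_or_gt with hy | hy
  · simp [gammaPDF_of_neg hy]
  have := Real.Gamma_pos_of_pos ha
  have := Real.Gamma_pos_of_pos hb
  have h_exp : y ^ (b - 1) * exp (-(q * y)) =
      y ^ (a - 1) * exp (-(r * y)) * exp ((b - a) * log y - (q - r) * y) := by
    simp only [Real.rpow_def_of_pos hy, ← Real.exp_add]
    ring_nf
  simp only [Pi.smul_apply, Pi.mul_apply, smul_eq_mul, gammaPDF_of_nonneg hy.le]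
  rw [← ENNReal.ofReal_mul (by positivity), ← ENNReal.ofReal_mul (by positivity), mul_assoc, h_exp]
  congr 1
  field_simp

theorem gammaMeasure_map_const_mul {a r c : ℝ} (hr : 0 ≤ r) (hc : 0 < c) :
    (gammaMeasure a r).map (c * ·) = gammaMeasure a (r / c) := by
  have h_pdf (y : ℝ) : gammaPDF a r y = ENNReal.ofReal c * gammaPDF a (r / c) (c * y) := by
    rcases lt_or_ge y 0 with hy | hy
    · simp [gammaPDF_of_neg hy, gammaPDF_of_neg (mul_neg_of_pos_of_neg hc hy)]
    · rw [gammaPDF_of_nonneg hy, gammaPDF_of_nonneg (by positivity), ← ENNReal.ofReal_mul hc.le,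
        Real.div_rpow hr hc.le, Real.mul_rpow hc.le hy, Real.rpow_sub_one hc.ne']
      congr 1
      field_simp
  ext B hB
  have hc_meas : Measurable (c * ·) := measurable_const_mul c
  calc (gammaMeasure a r).map (c * ·) B
      = ∫⁻ y in (c * ·) ⁻¹' B, ENNReal.ofReal c * gammaPDF a (r / c) (c * y) := by
        simp_rw [Measure.map_apply hc_meas hB, gammaMeasure, withDensity_apply _ (hc_meas hB),
          h_pdf]
    _ = ∫⁻ z in B, gammaPDF a (r / c) z ∂(ENNReal.ofReal |c| • volume.map (c * ·)) := by
        rw [lintegral_const_mul _ (by fun_prop), abs_of_pos hc, Measure.restrict_smul,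
          lintegral_smul_measure, smul_eq_mul,
          setLIntegral_map hB (measurable_gammaPDF _ _) hc_meas]
    _ = gammaMeasure a (r / c) B := by
        rw [Real.smul_map_volume_mul_left hc.ne', gammaMeasure, withDensity_apply _ hB]

end Gamma

section Mellin

variable {Ω : Type*} [MeasurableSpace Ω]

theorem ofReal_rpow_neg_eq_lintegral {α s : ℝ} (hα : 0 < α) (hs : 0 < s) :
    ENNReal.ofReal (s ^ (-α)) =
      ∫⁻ l in Ioi 0, ENNReal.ofReal (l ^ (α - 1) / Gamma α) * ENNReal.ofReal (exp (-(l * s))) := by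
  have := Real.Gamma_pos_of_pos hα
  have h_pdf : ∀ l ∈ Ioi (0 : ℝ),
      ENNReal.ofReal (l ^ (α - 1) / Gamma α) * ENNReal.ofReal (exp (-(l * s))) =
        ENNReal.ofReal (s ^ (-α)) * gammaPDF α s l := by
    intro l (hl : 0 < l)
    rw [gammaPDF_of_nonneg hl.le, ← ENNReal.ofReal_mul (by positivity),
      ← ENNReal.ofReal_mul (by positivity), Real.rpow_neg hs.le, mul_comm l s]
    congr 1
    field_simp
  have h_total : ∫⁻ l in Ioi 0, gammaPDF α s l = 1 := by
    have := isProbabilityMeasure_gammaMeasure hα hs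
    rw [← withDensity_apply _ measurableSet_Ioi, ← gammaMeasure]
    exact (mem_ae_iff_prob_eq_one measurableSet_Ioi).1 (ae_pos_gammaMeasure α s)
  rw [setLIntegral_congr_fun measurableSet_Ioi h_pdf,
    lintegral_const_mul _ (measurable_gammaPDF α s), h_total, mul_one]

theorem lintegral_mul_rpow_neg {μ : Measure Ω} [SFinite μ] {X : Ω → ℝ} (hX : Measurable X)
    (hX_pos : ∀ᵐ ω ∂μ, 0 < X ω) {α : ℝ} (hα : 0 < α) {H : Ω → ℝ≥0∞} (hH : Measurable H) :
    ∫⁻ ω, H ω * ENNReal.ofReal (X ω ^ (-α)) ∂μ =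
      ∫⁻ l in Ioi (0 : ℝ), ENNReal.ofReal (l ^ (α - 1) / Gamma α) *
        (∫⁻ ω, H ω * ENNReal.ofReal (exp (-(l * X ω))) ∂μ) := by
  calc ∫⁻ ω, H ω * ENNReal.ofReal (X ω ^ (-α)) ∂μ
      = ∫⁻ ω, (∫⁻ l in Ioi (0 : ℝ), ENNReal.ofReal (l ^ (α - 1) / Gamma α) *
          (H ω * ENNReal.ofReal (exp (-(l * X ω))))) ∂μ := by
        refine lintegral_congr_ae ?_
        filter_upwards [hX_pos] with ω hω
        rw [ofReal_rpow_neg_eq_lintegral hα hω, ← lintegral_const_mul _ (by fun_prop)]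
        exact lintegral_congr fun l => mul_left_comm ..
    _ = _ := by
        rw [lintegral_lintegral_swap (by fun_prop)]
        exact lintegral_congr fun l => lintegral_const_mul _ (by fun_prop)

theorem lintegral_mul_rpow_neg_eq_mul {μ : Measure Ω} [SFinite μ] {X : Ω → ℝ} (hX : Measurable X)
    (hX_pos : ∀ᵐ ω ∂μ, 0 < X ω) {α : ℝ} (hα : 0 < α) {H : Ω → ℝ≥0∞} (hH : Measurable H)
    (h_exp : ∀ l > 0, ∫⁻ ω, H ω * ENNReal.ofReal (exp (-(l * X ω))) ∂μ =
      (∫⁻ ω, ENNReal.ofReal (exp (-(l * X ω))) ∂μ) * ∫⁻ ω, H ω ∂μ) :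
    ∫⁻ ω, H ω * ENNReal.ofReal (X ω ^ (-α)) ∂μ =
      (∫⁻ ω, ENNReal.ofReal (X ω ^ (-α)) ∂μ) * ∫⁻ ω, H ω ∂μ := by
  have h_one := lintegral_mul_rpow_neg hX hX_pos hα (measurable_const (a := 1))
  simp only [one_mul] at h_one
  rw [lintegral_mul_rpow_neg hX hX_pos hα hH, h_one, ← lintegral_mul_const _ (by fun_prop)]
  refine setLIntegral_congr_fun measurableSet_Ioi fun l hl => ?_
  rw [h_exp l hl, mul_assoc]

end Mellin

section GammaPi

variable {ι : Type*} [Fintype ι]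

/-- The joint law of a sample, indexed by `ι`, of iid gamma variables of shape `a` and rate `r`. -/
noncomputable def gammaPi (ι : Type*) [Fintype ι] (a r : ℝ) : Measure (ι → ℝ) :=
  Measure.pi fun _ => gammaMeasure a r

theorem isProbabilityMeasure_gammaPi {a r : ℝ} (ha : 0 < a) (hr : 0 < r) :
    IsProbabilityMeasure (gammaPi ι a r) := by
  have := isProbabilityMeasure_gammaMeasure ha hr
  rw [gammaPi]
  infer_instance

theorem ae_pos_gammaPi {a r : ℝ} (ha : 0 < a) (hr : 0 < r) :
    ∀ᵐ y ∂gammaPi ι a r, ∀ i, 0 < y i := by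
  have := isProbabilityMeasure_gammaMeasure ha hr
  exact ae_all_iff.2 fun i =>
    (Measure.quasiMeasurePreserving_eval _ i).ae (ae_pos_gammaMeasure a r)

theorem gammaPi_eq_tilted {a b r q : ℝ} (ha : 0 < a) (hb : 0 < b) (hr : 0 < r) (hq : 0 < q) :
    gammaPi ι b q =
      (gammaPi ι a r).tilted fun y => (b - a) * ∑ i, log (y i) - (q - r) * ∑ i, y i := by
  have := isProbabilityMeasure_gammaMeasure ha hr
  simp only [gammaPi, gammaMeasure_eq_tilted ha hb hr hq]
  rw [pi_tilted fun _ => by fun_prop]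
  simp only [Finset.sum_sub_distrib, Finset.mul_sum]

theorem gammaPi_map_const_smul {a r c : ℝ} (ha : 0 < a) (hr : 0 < r) (hc : 0 < c) :
    (gammaPi ι a r).map (c • ·) = gammaPi ι a (r / c) := by
  have := isProbabilityMeasure_gammaMeasure ha (div_pos hr hc)
  have h_map := gammaMeasure_map_const_mul (a := a) hr.le hc
  have : IsProbabilityMeasure ((gammaMeasure a r).map (c * ·)) := h_map ▸ this
  rw [gammaPi, gammaPi, ← h_map]
  exact Measure.pi_map_pi fun _ => (measurable_const_mul c).aemeasurable

theorem lintegral_gammaPi_of_smul_invariant {a r : ℝ} (ha : 0 < a) (hr : 0 < r)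
    {H : (ι → ℝ) → ℝ≥0∞} (hH : Measurable H)
    (hH_smul : ∀ c : ℝ, 0 < c → ∀ y : ι → ℝ, (∀ i, 0 < y i) → H (c • y) = H y) :
    ∫⁻ y, H y ∂gammaPi ι a r = ∫⁻ y, H y ∂gammaPi ι a 1 := by
  rw [← div_self hr.ne', ← gammaPi_map_const_smul ha hr hr,
    lintegral_map hH (measurable_const_smul r)]
  refine lintegral_congr_ae ?_
  filter_upwards [ae_pos_gammaPi ha hr] with y hy
  exact (hH_smul r hr y hy).symm

-- Weighting by `exp (-c S)` changes the rate to `1 + c`, to which a scale-invariant `H` is blind.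
theorem lintegral_mul_exp_neg_sum {a c : ℝ} (ha : 0 < a) (hc : -1 < c)
    {H : (ι → ℝ) → ℝ≥0∞} (hH : Measurable H)
    (hH_smul : ∀ c : ℝ, 0 < c → ∀ y : ι → ℝ, (∀ i, 0 < y i) → H (c • y) = H y) :
    ∫⁻ y, H y * ENNReal.ofReal (exp (-(c * ∑ i, y i))) ∂gammaPi ι a 1 =
      (∫⁻ y, ENNReal.ofReal (exp (-(c * ∑ i, y i))) ∂gammaPi ι a 1) *
        ∫⁻ y, H y ∂gammaPi ι a 1 := by
  have hr : 0 < 1 + c := by linarith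
  set k := ENNReal.ofReal (∫ y, exp (-(c * ∑ i, y i)) ∂gammaPi ι a 1)⁻¹
  have h_rate (G : (ι → ℝ) → ℝ≥0∞) (hG : Measurable G) : ∫⁻ y, G y ∂gammaPi ι a (1 + c) =
      k * ∫⁻ y, G y * ENNReal.ofReal (exp (-(c * ∑ i, y i))) ∂gammaPi ι a 1 := by
    simp only [gammaPi_eq_tilted (ι := ι) ha ha one_pos hr, lintegral_tilted, sub_self, zero_mul,
      zero_sub, add_sub_cancel_left]
    rw [← lintegral_const_mul _ (by fun_prop)]
    refine lintegral_congr fun y => ?_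
    rw [div_eq_inv_mul, ENNReal.ofReal_mul (inv_nonneg.2 (integral_nonneg fun _ =>
      (Real.exp_pos _).le)), mul_assoc, mul_comm (G y)]
  have h_norm : k * ∫⁻ y, ENNReal.ofReal (exp (-(c * ∑ i, y i))) ∂gammaPi ι a 1 = 1 := by
    have := isProbabilityMeasure_gammaPi (ι := ι) ha hr
    simpa using (h_rate (fun _ => 1) measurable_const).symm
  rw [← lintegral_gammaPi_of_smul_invariant ha hr hH hH_smul, h_rate H hH, ← mul_assoc,
    mul_comm _ k, h_norm, one_mul]

end GammaPi

section LogMeanRatio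

variable {ι : Type*} [Fintype ι]

/-- The statistic `T₂`, the logarithm of the ratio of the geometric to the arithmetic mean. -/
noncomputable def logMeanRatio (y : ι → ℝ) : ℝ :=
  (∑ i, log (y i)) / Fintype.card ι - log ((∑ i, y i) / Fintype.card ι)

@[fun_prop]
theorem measurable_logMeanRatio : Measurable (logMeanRatio (ι := ι)) := by
  unfold logMeanRatio
  fun_prop

theorem card_mul_logMeanRatio [Nonempty ι] (y : ι → ℝ) :
    Fintype.card ι * logMeanRatio y =
      ∑ i, log (y i) - Fintype.card ι * log ((∑ i, y i) / Fintype.card ι) := by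
  rw [logMeanRatio]
  field_simp

theorem continuousAt_logMeanRatio [Nonempty ι] {y : ι → ℝ} (hy : ∀ i, 0 < y i) :
    ContinuousAt logMeanRatio y := by
  have h_sum : 0 < ∑ i, y i := Finset.sum_pos (fun i _ => hy i) Finset.univ_nonempty
  have h_log (i : ι) : ContinuousAt (fun y : ι → ℝ => log (y i)) y :=
    (continuousAt_apply i y).log (hy i).ne'
  unfold logMeanRatio
  exact (((tendsto_finsetSum _ fun i _ => h_log i).div_const _)).sub
    (ContinuousAt.log (by fun_prop) (by positivity))

theorem logMeanRatio_smul [Nonempty ι] {c : ℝ} (hc : 0 < c) {y : ι → ℝ} (hy : ∀ i, 0 < y i) :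
    logMeanRatio (c • y) = logMeanRatio y := by
  have h_sum : 0 < ∑ i, y i := Finset.sum_pos (fun i _ => hy i) Finset.univ_nonempty
  have h_log (i : ι) : log (c * y i) = log c + log (y i) := Real.log_mul hc.ne' (hy i).ne'
  simp only [logMeanRatio, Pi.smul_apply, smul_eq_mul, ← Finset.mul_sum, h_log,
    Finset.sum_add_distrib, Finset.sum_const, Finset.card_univ, nsmul_eq_mul, mul_div_assoc]
  rw [Real.log_mul hc.ne' (by positivity)]
  field_simp
  ring

theorem card_mul_logMeanRatio_le {y : ι → ℝ} (hy : ∀ i, 0 < y i) (i j : ι) :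
    Fintype.card ι * logMeanRatio y ≤
      log (y i) - log (y j) + Fintype.card ι * log (Fintype.card ι) := by
  classical
  have : Nonempty ι := ⟨i⟩
  have h_sum : 0 < ∑ k, y k := Finset.sum_pos (fun k _ => hy k) Finset.univ_nonempty
  have h_le (k : ι) : log (y k) ≤ log (∑ k, y k) :=
    Real.log_le_log (hy k) (Finset.single_le_sum (fun k _ => (hy k).le) (Finset.mem_univ k))
  have h_logs : ∑ k, log (y k) ≤ log (y i) + (Fintype.card ι - 1) * log (∑ k, y k) := by
    rw [← Finset.add_sum_erase _ _ (Finset.mem_univ i)]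
    gcongr
    refine (Finset.sum_le_card_nsmul _ _ _ fun k _ => h_le k).trans_eq ?_
    rw [Finset.card_erase_of_mem (Finset.mem_univ i), nsmul_eq_mul, Finset.card_univ,
      Nat.cast_pred Fintype.card_pos]
  rw [card_mul_logMeanRatio, Real.log_div h_sum.ne' (by positivity)]
  linarith [h_le j]

theorem exists_logMeanRatio_lt [Nontrivial ι] (t : ℝ) :
    ∃ y : ι → ℝ, (∀ i, 0 < y i) ∧ logMeanRatio y < t := by
  classical
  obtain ⟨i, j, hij⟩ := exists_pair_ne ι
  set n := (Fintype.card ι : ℝ) with hn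
  have hn_pos : 0 < n := by positivity
  set y : ι → ℝ := Function.update 1 i (exp (n * (t - log n) - 1)) with hy
  have hy_pos (k : ι) : 0 < y k := by
    rcases eq_or_ne k i with rfl | hk
    · simpa [hy] using Real.exp_pos _
    · simp [hy, hk]
  have h_le := card_mul_logMeanRatio_le hy_pos i j
  have hyi : log (y i) = n * (t - log n) - 1 := by simp [hy]
  have hyj : log (y j) = 0 := by simp [hy, hij.symm]
  exact ⟨y, hy_pos, lt_of_mul_lt_mul_left (by rw [← hn] at h_le; linarith) hn_pos.le⟩

end LogMeanRatio

section LogRatioLaw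

variable {ι : Type*} [Fintype ι]

/-- The law of the statistic `T₂` of a sample, indexed by `ι`, of iid `Gamma(x, 1)` variables. -/
noncomputable def logRatioLaw (ι : Type*) [Fintype ι] (x : ℝ) : Measure ℝ :=
  (gammaPi ι x 1).map logMeanRatio

theorem isProbabilityMeasure_logRatioLaw {x : ℝ} (hx : 0 < x) :
    IsProbabilityMeasure (logRatioLaw ι x) := by
  have := isProbabilityMeasure_gammaPi (ι := ι) hx one_pos
  exact Measure.isProbabilityMeasure_map (by fun_prop)

theorem lintegral_logMeanRatio_mul_rpow_mean [Nonempty ι] {a α : ℝ} (ha : 0 < a) (hα : 0 < α)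
    {g : ℝ → ℝ≥0∞} (hg : Measurable g) :
    ∫⁻ y, g (logMeanRatio y) * ENNReal.ofReal (((∑ i, y i) / Fintype.card ι) ^ (-α))
        ∂gammaPi ι a 1 =
      (∫⁻ y, ENNReal.ofReal (((∑ i, y i) / Fintype.card ι) ^ (-α)) ∂gammaPi ι a 1) *
        ∫⁻ y, g (logMeanRatio y) ∂gammaPi ι a 1 := by
  have := isProbabilityMeasure_gammaPi (ι := ι) ha one_pos
  refine lintegral_mul_rpow_neg_eq_mul (by fun_prop) ?_ hα (by fun_prop) fun l hl => ?_
  · filter_upwards [ae_pos_gammaPi ha one_pos] with y hy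
    have h_sum : 0 < ∑ i, y i := Finset.sum_pos (fun i _ => hy i) Finset.univ_nonempty
    positivity
  · have hl_card : -1 < l / Fintype.card ι := by
      have : 0 < l / Fintype.card ι := by positivity
      linarith
    simpa only [div_mul_eq_mul_div, mul_div_assoc] using
      lintegral_mul_exp_neg_sum ha hl_card (H := fun y => g (logMeanRatio y)) (by fun_prop)
        fun c hc y hy => by rw [logMeanRatio_smul hc hy]

theorem exp_mul_sum_log [Nonempty ι] {y : ι → ℝ} (hy : ∀ i, 0 < y i) (c : ℝ) :
    exp (c * ∑ i, log (y i)) = exp (Fintype.card ι * c * logMeanRatio y) *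
      ((∑ i, y i) / Fintype.card ι) ^ (Fintype.card ι * c) := by
  have h_sum : 0 < ∑ i, y i := Finset.sum_pos (fun i _ => hy i) Finset.univ_nonempty
  rw [Real.rpow_def_of_pos (by positivity), ← Real.exp_add, mul_right_comm, card_mul_logMeanRatio]
  ring_nf

theorem exists_logRatioLaw_eq_smul_withDensity [Nonempty ι] {a b : ℝ} (hb : 0 < b) (hba : b < a) :
    ∃ k : ℝ≥0∞, logRatioLaw ι b = k • (logRatioLaw ι a).withDensity
      fun u => ENNReal.ofReal (exp (Fintype.card ι * (b - a) * u)) := by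
  have ha := hb.trans hba
  set n := (Fintype.card ι : ℝ)
  have hn : 0 < n := by positivity
  set k₁ := ENNReal.ofReal (∫ y, exp ((b - a) * ∑ i, log (y i)) ∂gammaPi ι a 1)⁻¹
  set k₂ := ∫⁻ y, ENNReal.ofReal (((∑ i, y i) / n) ^ (-(n * (a - b)))) ∂gammaPi ι a 1
  refine ⟨k₁ * k₂, Measure.ext_of_lintegral _ fun g hg => ?_⟩
  have h_exp : Measurable fun u => ENNReal.ofReal (exp (n * (b - a) * u)) := by fun_prop
  have hα : n * (b - a) = -(n * (a - b)) := by ring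
  rw [lintegral_smul_measure, lintegral_withDensity_eq_lintegral_mul _ h_exp hg, logRatioLaw,
    logRatioLaw, lintegral_map hg (by fun_prop), lintegral_map (h_exp.mul hg) (by fun_prop),
    gammaPi_eq_tilted ha hb one_pos one_pos, lintegral_tilted]
  simp only [sub_self, zero_mul, sub_zero]
  calc ∫⁻ y, ENNReal.ofReal (exp ((b - a) * ∑ i, log (y i)) /
          ∫ y, exp ((b - a) * ∑ i, log (y i)) ∂gammaPi ι a 1) * g (logMeanRatio y) ∂gammaPi ι a 1
      = ∫⁻ y, k₁ * (ENNReal.ofReal (exp (n * (b - a) * logMeanRatio y)) * g (logMeanRatio y) *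
          ENNReal.ofReal (((∑ i, y i) / n) ^ (-(n * (a - b))))) ∂gammaPi ι a 1 := by
        refine lintegral_congr_ae ?_
        filter_upwards [ae_pos_gammaPi ha one_pos] with y hy
        rw [exp_mul_sum_log hy, div_eq_inv_mul, ENNReal.ofReal_mul (inv_nonneg.2
          (integral_nonneg fun _ => (Real.exp_pos _).le)), ENNReal.ofReal_mul (Real.exp_pos _).le,
          ← hα]
        ring
    _ = k₁ * k₂ * ∫⁻ y, ENNReal.ofReal (exp (n * (b - a) * logMeanRatio y)) *
          g (logMeanRatio y) ∂gammaPi ι a 1 := by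
        rw [lintegral_const_mul _ (by fun_prop), mul_assoc]
        congr 1
        exact lintegral_logMeanRatio_mul_rpow_mean ha (mul_pos hn (sub_pos.2 hba)) (h_exp.mul hg)

theorem logRatioLaw_eq_tilted [Nonempty ι] {a b : ℝ} (hb : 0 < b) (hba : b < a) :
    logRatioLaw ι b = (logRatioLaw ι a).tilted (Fintype.card ι * (b - a) * ·) := by
  have := isProbabilityMeasure_logRatioLaw (ι := ι) hb
  obtain ⟨k, hk⟩ := exists_logRatioLaw_eq_smul_withDensity (ι := ι) hb hba
  exact eq_tilted_of_eq_smul_withDensity (by fun_prop) hk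

theorem integrable_exp_logRatioLaw [Nonempty ι] {a b : ℝ} (hb : 0 < b) (hba : b < a) :
    Integrable (fun u => exp (Fintype.card ι * (b - a) * u)) (logRatioLaw ι a) := by
  by_contra h
  have := isProbabilityMeasure_logRatioLaw (ι := ι) hb
  exact IsProbabilityMeasure.ne_zero (logRatioLaw ι b)
    ((logRatioLaw_eq_tilted hb hba).trans (tilted_of_not_integrable h))

theorem logRatioLaw_ne_zero [Nonempty ι] {x : ℝ} (hx : 0 < x) {U : Set ℝ} (hU : IsOpen U)
    {y : ι → ℝ} (hy : ∀ i, 0 < y i) (hyU : logMeanRatio y ∈ U) : logRatioLaw ι x U ≠ 0 := by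
  have := isProbabilityMeasure_gammaMeasure hx one_pos
  rw [logRatioLaw, Measure.map_apply measurable_logMeanRatio hU.measurableSet]
  refine ((Measure.mem_support_iff_forall y).1 (mem_support_pi fun i =>
    mem_support_gammaMeasure hx one_pos (hy i)) _ ?_).ne'
  exact (continuousAt_logMeanRatio hy).preimage_mem_nhds (hU.mem_nhds hyU)

theorem logRatioLaw_Ioi_ne_zero [Nonempty ι] {x s : ℝ} (hx : 0 < x) (hs : s < 0) :
    logRatioLaw ι x (Ioi s) ≠ 0 :=
  logRatioLaw_ne_zero hx isOpen_Ioi (y := 1) (fun _ => one_pos) (by simpa [logMeanRatio] using hs)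

theorem logRatioLaw_Iic_ne_zero [Nontrivial ι] {x : ℝ} (hx : 0 < x) (t : ℝ) :
    logRatioLaw ι x (Iic t) ≠ 0 := by
  obtain ⟨y, hy, hyt⟩ := exists_logMeanRatio_lt (ι := ι) t
  exact mt (measure_mono_null Iio_subset_Iic_self) (logRatioLaw_ne_zero hx isOpen_Iio hy hyt)

end LogRatioLaw

section SmallShape

theorem tendsto_inv_Gamma_zero : Tendsto (fun x => (Gamma x)⁻¹) (𝓝[>] 0) (𝓝 0) := by
  have h_cont : ContinuousAt (fun x => Gamma (x + 1)) 0 := by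
    refine ContinuousAt.comp (g := Gamma) (f := fun x => x + 1) ?_ (by fun_prop)
    refine (Real.differentiableAt_Gamma fun m h_eq => ?_).continuousAt
    linarith [(Nat.cast_nonneg m : (0 : ℝ) ≤ m)]
  have h_lim : Tendsto (fun x => x / Gamma (x + 1)) (𝓝[>] 0) (𝓝 0) := by
    have h : ContinuousAt (fun x => x / Gamma (x + 1)) 0 := continuousAt_id.div h_cont (by simp)
    simpa [ContinuousAt] using h.mono_left nhdsWithin_le_nhds
  refine h_lim.congr' ?_
  filter_upwards [self_mem_nhdsWithin] with x (hx : 0 < x)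
  rw [Real.Gamma_add_one hx.ne', div_mul_cancel_left₀ hx.ne']

theorem gammaPDFReal_one_le {x y : ℝ} (hx : 0 < x) (hx_le : x ≤ 1) (hy : 0 < y) :
    gammaPDFReal x 1 y ≤ (Gamma x)⁻¹ * y⁻¹ := by
  have hΓ := Real.Gamma_pos_of_pos hx
  have h_exp : y ^ (x - 1) * exp (-y) ≤ y⁻¹ := by
    rw [Real.rpow_def_of_pos hy, ← Real.exp_add, ← Real.exp_log (inv_pos.2 hy), Real.log_inv,
      Real.exp_le_exp]
    nlinarith [Real.log_le_sub_one_of_pos hy]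
  simpa [gammaPDFReal, hy.le, mul_assoc] using mul_le_mul_of_nonneg_left h_exp (inv_nonneg.2 hΓ.le)

theorem gammaMeasure_abs_log_sub_le {x C : ℝ} (hx : 0 < x) (hx_le : x ≤ 1) (hC : 0 ≤ C) (l : ℝ) :
    gammaMeasure x 1 {y | |log y - l| ≤ C} ≤ ENNReal.ofReal (2 * C / Gamma x) := by
  have h_lower := Real.exp_pos (l - C)
  have h_le : exp (l - C) ≤ exp (l + C) := Real.exp_le_exp.2 (by linarith)
  have h_cont : ContinuousOn (fun y : ℝ => (Gamma x)⁻¹ * y⁻¹) (Icc (exp (l - C)) (exp (l + C))) :=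
    continuousOn_const.mul (continuousOn_inv₀.mono fun y hy => (h_lower.trans_le hy.1).ne')
  have h_Icc : ({y | |log y - l| ≤ C} : Set ℝ) ≤ᵐ[gammaMeasure x 1]
      Icc (exp (l - C)) (exp (l + C)) := by
    filter_upwards [ae_pos_gammaMeasure x 1] with y hy hlog
    have := abs_le.1 hlog
    exact ⟨(Real.le_log_iff_exp_le hy).1 (by linarith), (Real.log_le_iff_le_exp hy).1 (by linarith)⟩
  calc gammaMeasure x 1 {y | |log y - l| ≤ C}
      ≤ gammaMeasure x 1 (Icc (exp (l - C)) (exp (l + C))) := measure_mono_ae h_Icc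
    _ = ∫⁻ y in Icc (exp (l - C)) (exp (l + C)), gammaPDF x 1 y := by
        rw [gammaMeasure, withDensity_apply _ measurableSet_Icc]
    _ ≤ ∫⁻ y in Icc (exp (l - C)) (exp (l + C)), ENNReal.ofReal ((Gamma x)⁻¹ * y⁻¹) :=
        setLIntegral_mono' measurableSet_Icc fun y hy => ENNReal.ofReal_le_ofReal
          (gammaPDFReal_one_le hx hx_le (h_lower.trans_le hy.1))
    _ = ENNReal.ofReal (∫ y in exp (l - C)..exp (l + C), (Gamma x)⁻¹ * y⁻¹) := by
        rw [intervalIntegral.integral_of_le h_le, ← integral_Icc_eq_integral_Ioc]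
        refine (ofReal_integral_eq_lintegral_ofReal h_cont.integrableOn_Icc ?_).symm
        filter_upwards [ae_restrict_mem measurableSet_Icc] with y hy
        have := Real.Gamma_pos_of_pos hx
        have := h_lower.trans_le hy.1
        positivity
    _ = ENNReal.ofReal (2 * C / Gamma x) := by
        rw [intervalIntegral.integral_const_mul, integral_inv_of_pos h_lower (Real.exp_pos _),
          ← Real.exp_sub, Real.log_exp]
        ring_nf

variable {ι : Type*} [Fintype ι]

theorem gammaPi_abs_log_sub_log_le {x C : ℝ} (hx : 0 < x) (hx_le : x ≤ 1) (hC : 0 ≤ C) {i j : ι}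
    (hij : i ≠ j) :
    gammaPi ι x 1 {y | |log (y j) - log (y i)| ≤ C} ≤ ENNReal.ofReal (2 * C / Gamma x) := by
  have := isProbabilityMeasure_gammaMeasure hx one_pos
  have := isProbabilityMeasure_gammaPi (ι := ι) hx one_pos
  have h_map (k : ι) : (gammaPi ι x 1).map (fun y => y k) = gammaMeasure x 1 :=
    (measurePreserving_eval (fun _ : ι => gammaMeasure x 1) k).map_eq
  have h_indep : IndepFun (fun y : ι → ℝ => y i) (fun y => y j) (gammaPi ι x 1) :=
    (iIndepFun_pi fun _ => aemeasurable_id).indepFun hij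
  have h_pair : (gammaPi ι x 1).map (fun y => (y i, y j)) =
      (gammaMeasure x 1).prod (gammaMeasure x 1) := by
    rw [h_indep.map_prod_eq_prod_map_map (measurable_pi_apply i).aemeasurable
      (measurable_pi_apply j).aemeasurable, h_map, h_map]
  have h_meas : MeasurableSet {p : ℝ × ℝ | |log p.2 - log p.1| ≤ C} :=
    measurableSet_le (by fun_prop) measurable_const
  calc gammaPi ι x 1 {y | |log (y j) - log (y i)| ≤ C}
      = (gammaMeasure x 1).prod (gammaMeasure x 1) {p | |log p.2 - log p.1| ≤ C} := by
        rw [← h_pair, Measure.map_apply (by fun_prop) h_meas]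
        rfl
    _ = ∫⁻ z, gammaMeasure x 1 {y | |log y - log z| ≤ C} ∂gammaMeasure x 1 :=
        Measure.prod_apply h_meas
    _ ≤ ∫⁻ _, ENNReal.ofReal (2 * C / Gamma x) ∂gammaMeasure x 1 :=
        lintegral_mono fun z => gammaMeasure_abs_log_sub_le hx hx_le hC (log z)
    _ = ENNReal.ofReal (2 * C / Gamma x) := by simp

theorem logRatioLaw_Ioi_le [Nontrivial ι] {x t : ℝ} (hx : 0 < x) (hx_le : x ≤ 1) (ht : t ≤ 0) :
    logRatioLaw ι x (Ioi t) ≤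
      ENNReal.ofReal (2 * (Fintype.card ι * (log (Fintype.card ι) - t)) / Gamma x) := by
  obtain ⟨i, j, hij⟩ := exists_pair_ne ι
  set n := (Fintype.card ι : ℝ)
  have hC : 0 ≤ n * (log n - t) :=
    mul_nonneg (Nat.cast_nonneg _) (by linarith [Real.log_natCast_nonneg (Fintype.card ι)])
  have h_subset : logMeanRatio ⁻¹' Ioi t ≤ᵐ[gammaPi ι x 1]
      {y | |log (y j) - log (y i)| ≤ n * (log n - t)} := by
    filter_upwards [ae_pos_gammaPi hx one_pos] with y hy (hyt : t < logMeanRatio y)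
    have h_mul : n * t ≤ n * logMeanRatio y := by gcongr
    have h_ij := card_mul_logMeanRatio_le hy i j
    have h_ji := card_mul_logMeanRatio_le hy j i
    exact abs_le.2 ⟨by linarith, by linarith⟩
  rw [logRatioLaw, Measure.map_apply measurable_logMeanRatio measurableSet_Ioi]
  exact (measure_mono_ae h_subset).trans (gammaPi_abs_log_sub_log_le hx hx_le hC hij)

end SmallShape

section DistributionFunction

variable {ι : Type*} [Fintype ι] {t : ℝ}

theorem strictAntiOn_logRatioLaw_Iic [Nontrivial ι] (ht : t < 0) :
    StrictAntiOn (fun x => (logRatioLaw ι x).real (Iic t)) (Ioi 0) := by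
  intro x (hx : 0 < x) x' (hx' : 0 < x') hxx'
  have := isProbabilityMeasure_logRatioLaw (ι := ι) hx'
  have hθ : Fintype.card ι * (x - x') < 0 := mul_neg_of_pos_of_neg (by positivity) (by linarith)
  dsimp only
  rw [logRatioLaw_eq_tilted hx hxx']
  exact real_Iic_lt_tilted_real_Iic hθ (by linarith : t < t / 2)
    (integrable_exp_logRatioLaw hx hxx') (logRatioLaw_Iic_ne_zero hx' t)
    (logRatioLaw_Ioi_ne_zero hx' (by linarith))

theorem tendsto_logRatioLaw_Iic_nhdsGT_zero [Nontrivial ι] (ht : t ≤ 0) :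
    Tendsto (fun x => (logRatioLaw ι x).real (Iic t)) (𝓝[>] 0) (𝓝 1) := by
  set C := 2 * (Fintype.card ι * (log (Fintype.card ι) - t))
  have h_lim : Tendsto (fun x => 1 - C / Gamma x) (𝓝[>] 0) (𝓝 1) := by
    simpa [div_eq_mul_inv] using (tendsto_inv_Gamma_zero.const_mul C).const_sub 1
  have h_lower : ∀ᶠ x in 𝓝[>] 0, 1 - C / Gamma x ≤ (logRatioLaw ι x).real (Iic t) := by
    filter_upwards [Ioc_mem_nhdsGT one_pos] with x ⟨hx, hx_le⟩
    have := isProbabilityMeasure_logRatioLaw (ι := ι) hx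
    have := Real.Gamma_pos_of_pos hx
    have hC : 0 ≤ C := mul_nonneg zero_le_two (mul_nonneg (Nat.cast_nonneg _)
      (by linarith [Real.log_natCast_nonneg (Fintype.card ι)]))
    have h_Ioi : (logRatioLaw ι x).real (Ioi t) ≤ C / Gamma x :=
      ENNReal.toReal_le_of_le_ofReal (by positivity) (logRatioLaw_Ioi_le hx hx_le ht)
    rw [← compl_Iic, probReal_compl_eq_one_sub measurableSet_Iic] at h_Ioi
    linarith
  have h_upper : ∀ᶠ x in 𝓝[>] 0, (logRatioLaw ι x).real (Iic t) ≤ 1 := by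
    filter_upwards [self_mem_nhdsWithin] with x hx
    have := isProbabilityMeasure_logRatioLaw (ι := ι) hx
    exact measureReal_le_one
  exact tendsto_of_tendsto_of_tendsto_of_le_of_le' h_lim tendsto_const_nhds h_lower h_upper

theorem tendsto_logRatioLaw_Iic_atTop [Nonempty ι] (ht : t < 0) :
    Tendsto (fun x => (logRatioLaw ι x).real (Iic t)) atTop (𝓝 0) := by
  set n := (Fintype.card ι : ℝ)
  have := isProbabilityMeasure_logRatioLaw (ι := ι) one_pos
  have hn : 0 < n := by positivity
  have h_pos : 0 < (logRatioLaw ι 1).real (Ioi (t / 2)) :=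
    ENNReal.toReal_pos (logRatioLaw_Ioi_ne_zero one_pos (by linarith)) (by finiteness)
  have h_upper : ∀ᶠ x in atTop, (logRatioLaw ι x).real (Iic t) ≤
      exp (n * (1 - x) * (t / 2 - t)) / (logRatioLaw ι 1).real (Ioi (t / 2)) := by
    filter_upwards [eventually_gt_atTop 1] with x hx
    have := isProbabilityMeasure_logRatioLaw (ι := ι) (one_pos.trans hx)
    rw [le_div_iff₀ h_pos, logRatioLaw_eq_tilted one_pos hx]
    exact real_Iic_mul_tilted_real_Ioi_le (mul_nonpos_of_nonneg_of_nonpos hn.le (by linarith))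
  have h_exponent : Tendsto (fun x => n * (1 - x) * (t / 2 - t)) atTop atBot :=
    ((tendsto_atBot_add_const_left _ 1 tendsto_neg_atTop_atBot).const_mul_atBot hn).atBot_mul_const
      (by linarith)
  have h_lim := (Real.tendsto_exp_atBot.comp h_exponent).div_const
    ((logRatioLaw ι 1).real (Ioi (t / 2)))
  rw [zero_div] at h_lim
  exact squeeze_zero' (Eventually.of_forall fun _ => measureReal_nonneg) h_upper h_lim

theorem Ioo_subset_interior_integrableExpSet_logRatioLaw [Nonempty ι] (b : ℝ) :
    Ioo (-(Fintype.card ι * b)) 0 ⊆ interior (integrableExpSet id (logRatioLaw ι b)) := by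
  refine interior_maximal (fun θ ⟨hθ_lower, hθ_upper⟩ => ?_) isOpen_Ioo
  have hn : (0 : ℝ) < Fintype.card ι := by positivity
  have hb_pos : 0 < b + θ / Fintype.card ι := by
    rw [← neg_lt_iff_pos_add', lt_div_iff₀ hn]
    linarith
  have hb_lt : b + θ / Fintype.card ι < b := by linarith [div_neg_of_neg_of_pos hθ_upper hn]
  have h_int := integrable_exp_logRatioLaw (ι := ι) hb_pos hb_lt
  rwa [add_sub_cancel_left, mul_div_cancel₀ _ hn.ne'] at h_int

theorem continuousOn_logRatioLaw_Iic [Nonempty ι] :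
    ContinuousOn (fun x => (logRatioLaw ι x).real (Iic t)) (Ioi 0) := by
  suffices h_Ioo : ∀ b > 0, ContinuousOn (fun x => (logRatioLaw ι x).real (Iic t)) (Ioo 0 b) by
    intro x (hx : 0 < x)
    have h_nhds : Ioo 0 (x + 1) ∈ 𝓝 x := Ioo_mem_nhds hx (lt_add_one x)
    exact ((h_Ioo (x + 1) (by positivity)).continuousAt h_nhds).continuousWithinAt
  intro b hb
  have := isProbabilityMeasure_logRatioLaw (ι := ι) hb
  have hn : (0 : ℝ) < Fintype.card ι := by positivity
  have h_maps : MapsTo (fun x => Fintype.card ι * (x - b)) (Ioo 0 b)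
      (interior (integrableExpSet id (logRatioLaw ι b))) := fun x hx =>
    Ioo_subset_interior_integrableExpSet_logRatioLaw b ⟨by nlinarith [hx.1], by nlinarith [hx.2]⟩
  have h_tilted := (continuousOn_tilted_real_apply (A := Iic t) measurableSet_Iic).comp
    (by fun_prop) h_maps
  exact h_tilted.congr fun x hx =>
    congrArg (fun ν : Measure ℝ => ν.real (Iic t)) (logRatioLaw_eq_tilted hx.1 hx.2)

end DistributionFunction

theorem gammaLogRatioCDF_eq (n : ℕ) (x t : ℝ) :
    gammaLogRatioCDF n x t = (logRatioLaw (Fin n) x).real (Iic t) := by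
  rw [measureReal_def, logRatioLaw, Measure.map_apply measurable_logMeanRatio measurableSet_Iic]
  simp [gammaLogRatioCDF, gammaPi, logMeanRatio, preimage]

end GammaLogRatio

/-- Existence and uniqueness of the auxiliary-variable solution in the gamma IM
(Appendix A.1): for every `t₂ < 0` (the support of `T₂` is contained in `(-∞,0)`)
and every `u₂ ∈ (0,1)`, the equation `F_x(t₂) = u₂` has a unique solution
`x ∈ (0,∞)`; indeed `x ↦ F_x(t₂)` is strictly decreasing on `(0,∞)` with limits
`1` as `x → 0⁺` and `0` as `x → ∞`. -/
theorem gamma_shape_solution_exists_unique (n : ℕ) (hn : 2 ≤ n)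
    (t₂ : ℝ) (ht₂ : t₂ < 0) :
    StrictAntiOn (fun x => gammaLogRatioCDF n x t₂) (Ioi 0) ∧
    Tendsto (fun x => gammaLogRatioCDF n x t₂) (nhdsWithin 0 (Ioi 0)) (nhds 1) ∧
    Tendsto (fun x => gammaLogRatioCDF n x t₂) atTop (nhds 0) ∧
    ∀ u₂ ∈ Ioo (0:ℝ) 1, ∃! x : ℝ, x ∈ Ioi (0:ℝ) ∧ gammaLogRatioCDF n x t₂ = u₂ := by
  have : Nontrivial (Fin n) := Fin.nontrivial_iff_two_le.2 hn
  simp only [GammaLogRatio.gammaLogRatioCDF_eq]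
  have h_anti := GammaLogRatio.strictAntiOn_logRatioLaw_Iic (ι := Fin n) ht₂
  have h_zero := GammaLogRatio.tendsto_logRatioLaw_Iic_nhdsGT_zero (ι := Fin n) ht₂.le
  have h_top := GammaLogRatio.tendsto_logRatioLaw_Iic_atTop (ι := Fin n) ht₂
  have h_cont := GammaLogRatio.continuousOn_logRatioLaw_Iic (ι := Fin n) (t := t₂)
  refine ⟨h_anti, h_zero, h_top, fun u hu => ?_⟩
  obtain ⟨x, hx, hxu⟩ := isPreconnected_Ioi.intermediate_value_Ioo
    (l₂ := nhdsWithin 0 (Ioi 0)) (le_principal_iff.2 (Ioi_mem_atTop 0)) inf_le_right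
    h_cont h_top h_zero hu
  exact ⟨x, ⟨hx, hxu⟩, fun x' ⟨hx', hxu'⟩ => h_anti.injOn hx' hx (hxu'.trans hxu.symm)⟩
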